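/- arXiv:2105.12062 — 2 statements merged into one kernel-verified Lean document; each statement's English description precedes it below -/
import Mathlib

section
/- Let f : ℝ^d → ℝ be L-smooth and convex (L > 0). Run gradient-related iterations x_{k+1} = x_k - (1/L)∇f(x_k) - (2θ_{k+1}³ - θ_{k+1}²)v_{k+1}, v_{k+1} = v_k + (1/(Lθ_kθ_{k+1}²))∇f(x_k), with v_0 = 0, θ_N = 1, θ_k² - θ_k = θ_{k+1}². Then ‖∇f(x_N)‖² ≤ 8L(f(x_0) - f(x⋆))/(N+2)², where x⋆ is any minimizer of f. -/
/-!
Along OGM-G an energy of the state `(θ k, x k, v k)`, measured relative to the last iterate `x N`,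
never increases: its decrease at each step is a positive combination of the slacks in the
interpolation inequality
`f b + ⟪∇ f b, a - b⟫ + ‖∇ f a - ∇ f b‖² / (2L) ≤ f a` at the pairs `(x k, x (k + 1))` and
`(x N, x k)`. At the end the energy equals `‖∇ f (x N)‖² / L`. At the start, where `v 0 = 0`, it is
at most `2 (f (x 0) - inf f) / θ 0 ^ 2`, since a gradient step of length `1 / L` lowers `f` by
`‖∇ f‖² / (2L)`. Finally `θ` grows by at least `1 / 2` per backward step, so `θ 0 ≥ (N + 2) / 2`.
-/

open scoped Gradient RealInnerProductSpace

lemma sq_sub_self_of_eq_one_add_sqrt_div_two {s t : ℝ} (h : t = (1 + √(1 + 4 * s ^ 2)) / 2) :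
    t ^ 2 - t = s ^ 2 := by
  have hsqrt : √(1 + 4 * s ^ 2) ^ 2 = 1 + 4 * s ^ 2 := Real.sq_sqrt (by positivity)
  rw [h]
  linear_combination hsqrt / 4

lemma add_half_le_of_eq_one_add_sqrt_div_two {s t : ℝ} (h : t = (1 + √(1 + 4 * s ^ 2)) / 2) :
    s + 1 / 2 ≤ t := by
  have hsqrt : 2 * s ≤ √(1 + 4 * s ^ 2) := Real.le_sqrt_of_sq_le (by linarith)
  linarith

lemma add_sub_mul_le_of_forall_add_le {u : ℕ → ℝ} {c : ℝ} {n : ℕ}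
    (hu : ∀ k < n, u (k + 1) + c ≤ u k) {k : ℕ} (hk : k ≤ n) :
    u n + ((n : ℝ) - k) * c ≤ u k := by
  induction hk using Nat.decreasingInduction with
  | self => simp
  | of_succ k hk ih =>
    push_cast at ih
    linarith [hu k hk]

section OGMG

variable {E : Type*} [NormedAddCommGroup E] [InnerProductSpace ℝ E] [CompleteSpace E]
  {f : E → ℝ} {L : ℝ}

lemma hasDerivAt_comp_lineMap_inner_gradient (x y : E) {t : ℝ}
    (hf : DifferentiableAt ℝ f (AffineMap.lineMap x y t)) :
    HasDerivAt (fun s ↦ f (AffineMap.lineMap x y s))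
      ⟪∇ f (AffineMap.lineMap x y t), y - x⟫ t :=
  hf.hasGradientAt.hasFDerivAt.comp_hasDerivAt t AffineMap.hasDerivAt_lineMap

lemma add_inner_gradient_le_of_convexOn {s : Set E} (hconv : ConvexOn ℝ s f) {x y : E}
    (hx : x ∈ s) (hy : y ∈ s) (hf : DifferentiableAt ℝ f x) :
    f x + ⟪∇ f x, y - x⟫ ≤ f y := by
  have hderiv := hasDerivAt_comp_lineMap_inner_gradient x y (t := 0) (by simpa using hf)
  have hslope := (hconv.comp_affineMap (AffineMap.lineMap x y)).le_slope_of_hasDerivAt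
    (by simpa using hx) (by simpa using hy) zero_lt_one hderiv
  simp only [slope_def_field, Function.comp_apply, AffineMap.lineMap_apply_zero,
    AffineMap.lineMap_apply_one, sub_zero, div_one] at hslope
  linarith

lemma le_add_inner_gradient_add_sq_of_lipschitz (hdiff : Differentiable ℝ f)
    (hlip : ∀ x y, ‖∇ f x - ∇ f y‖ ≤ L * ‖x - y‖) (x y : E) :
    f y ≤ f x + ⟪∇ f x, y - x⟫ + L / 2 * ‖y - x‖ ^ 2 := by
  have hderiv (t : ℝ) := hasDerivAt_comp_lineMap_inner_gradient x y (hdiff _) (t := t)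
  have hquad (t : ℝ) : HasDerivAt
      (fun s ↦ f x + s * ⟪∇ f x, y - x⟫ + L / 2 * s ^ 2 * ‖y - x‖ ^ 2)
      (⟪∇ f x, y - x⟫ + L * t * ‖y - x‖ ^ 2) t := by
    refine (((hasDerivAt_mul_const _).const_add _).add
      (((hasDerivAt_pow 2 t).const_mul (L / 2)).mul_const (‖y - x‖ ^ 2))).congr_deriv ?_
    ring
  have hbound (t : ℝ) (ht : t ∈ Set.Ico (0 : ℝ) 1) :
      ⟪∇ f (AffineMap.lineMap x y t), y - x⟫ ≤ ⟪∇ f x, y - x⟫ + L * t * ‖y - x‖ ^ 2 := by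
    rw [← sub_le_iff_le_add', ← inner_sub_left]
    calc ⟪∇ f (AffineMap.lineMap x y t) - ∇ f x, y - x⟫
        ≤ ‖∇ f (AffineMap.lineMap x y t) - ∇ f x‖ * ‖y - x‖ := real_inner_le_norm _ _
      _ ≤ L * ‖AffineMap.lineMap x y t - x‖ * ‖y - x‖ := by gcongr; exact hlip _ _
      _ = L * t * ‖y - x‖ ^ 2 := by
        rw [← vsub_eq_sub (AffineMap.lineMap x y t), AffineMap.lineMap_vsub_left, vsub_eq_sub,
          norm_smul, Real.norm_of_nonneg ht.1]
        ring
  simpa using image_le_of_deriv_right_le_deriv_boundary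
    (fun t _ ↦ (hderiv t).continuousAt.continuousWithinAt)
    (fun t _ ↦ (hderiv t).hasDerivWithinAt) (by simp)
    (fun t _ ↦ (hquad t).continuousAt.continuousWithinAt)
    (fun t _ ↦ (hquad t).hasDerivWithinAt) hbound (Set.right_mem_Icc.2 zero_le_one)

lemma norm_gradient_sq_div_le_sub_of_forall_le (hL : 0 < L) (hdiff : Differentiable ℝ f)
    (hlip : ∀ x y, ‖∇ f x - ∇ f y‖ ≤ L * ‖x - y‖) {m : ℝ} (hm : ∀ y, m ≤ f y) (x : E) :
    ‖∇ f x‖ ^ 2 / (2 * L) ≤ f x - m := by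
  have hstep := le_add_inner_gradient_add_sq_of_lipschitz hdiff hlip x (x - L⁻¹ • ∇ f x)
  rw [sub_sub_cancel_left, inner_neg_right, real_inner_smul_right, real_inner_self_eq_norm_sq,
    norm_neg, norm_smul, Real.norm_of_nonneg (inv_nonneg.2 hL.le)] at hstep
  have hdecrease : L⁻¹ * ‖∇ f x‖ ^ 2 - L / 2 * (L⁻¹ * ‖∇ f x‖) ^ 2 = ‖∇ f x‖ ^ 2 / (2 * L) := by
    field_simp
    ring
  linarith [hm (x - L⁻¹ • ∇ f x)]

/-- The slack at `(a, b)` in the interpolation inequality characterising convex functions with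
`L`-Lipschitz gradient; the decrease of the OGM-G energy is expressed through it. -/
noncomputable def interpolationGap (L : ℝ) (f : E → ℝ) (a b : E) : ℝ :=
  f a - f b - ⟪∇ f b, a - b⟫ - ‖∇ f a - ∇ f b‖ ^ 2 / (2 * L)

lemma interpolationGap_nonneg (hL : 0 < L) (hdiff : Differentiable ℝ f)
    (hconv : ConvexOn ℝ Set.univ f) (hlip : ∀ x y, ‖∇ f x - ∇ f y‖ ≤ L * ‖x - y‖) (a b : E) :
    0 ≤ interpolationGap L f a b := by
  -- The minimiser of the difference between the quadratic upper model of `f` at `a` and its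
  -- affine lower model at `b`.
  set z := a - L⁻¹ • (∇ f a - ∇ f b)
  have hlower := add_inner_gradient_le_of_convexOn hconv (Set.mem_univ b) (Set.mem_univ z) (hdiff b)
  have hupper := le_add_inner_gradient_add_sq_of_lipschitz hdiff hlip a z
  have hza : z - a = -(L⁻¹ • (∇ f a - ∇ f b)) := sub_sub_cancel_left _ _
  have hzb : z - b = (a - b) - L⁻¹ • (∇ f a - ∇ f b) := sub_right_comm _ _ _
  rw [hzb, inner_sub_right, real_inner_smul_right] at hlower
  rw [hza, inner_neg_right, real_inner_smul_right, norm_neg, norm_smul,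
    Real.norm_of_nonneg (inv_nonneg.2 hL.le)] at hupper
  have hmodels : L⁻¹ * ⟪∇ f a, ∇ f a - ∇ f b⟫ - L⁻¹ * ⟪∇ f b, ∇ f a - ∇ f b⟫
      - L / 2 * (L⁻¹ * ‖∇ f a - ∇ f b‖) ^ 2 = ‖∇ f a - ∇ f b‖ ^ 2 / (2 * L) := by
    rw [← mul_sub, ← inner_sub_left, real_inner_self_eq_norm_sq]
    field_simp
    ring
  unfold interpolationGap
  linarith

/-- The energy of OGM-G in the state with weight `t = θ k`, iterate `x = x k` and momentum
`v = v k`, relative to the final iterate `y = x N`. The terms involving `v` vanish both at the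
start, where `v = 0`, and at the end, where `t = 1` and `x = y`. -/
noncomputable def ogmgEnergy (L : ℝ) (f : E → ℝ) (y : E) (t : ℝ) (x v : E) : ℝ :=
  (f x - f y + (‖∇ f x‖ ^ 2 + ‖∇ f y‖ ^ 2) / (2 * L)) / t ^ 2
    + ⟪v, L • (y - x) - ∇ f y + (2 * t - 1) • ∇ f x⟫ + L * (t * (t - 1)) ^ 2 * ‖v‖ ^ 2

lemma ogmgEnergy_one_self (L : ℝ) (f : E → ℝ) (y v : E) :
    ogmgEnergy L f y 1 y v = ‖∇ f y‖ ^ 2 / L := by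
  have hinner : L • (y - y) - ∇ f y + (2 * 1 - 1 : ℝ) • ∇ f y = 0 := by
    rw [sub_self, smul_zero]
    module
  rw [ogmgEnergy, hinner, inner_zero_right]
  ring

lemma ogmgEnergy_zero_le (hL : 0 < L) (hdiff : Differentiable ℝ f)
    (hlip : ∀ x y, ‖∇ f x - ∇ f y‖ ≤ L * ‖x - y‖) {m : ℝ} (hm : ∀ y, m ≤ f y) (y x : E) (t : ℝ) :
    ogmgEnergy L f y t x 0 ≤ 2 * (f x - m) / t ^ 2 := by
  have hgradient := norm_gradient_sq_div_le_sub_of_forall_le hL hdiff hlip hm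
  have hinitial : f x - f y + (‖∇ f x‖ ^ 2 + ‖∇ f y‖ ^ 2) / (2 * L) ≤ 2 * (f x - m) := by
    rw [add_div]
    linarith [hgradient x, hgradient y]
  calc ogmgEnergy L f y t x 0
      = (f x - f y + (‖∇ f x‖ ^ 2 + ‖∇ f y‖ ^ 2) / (2 * L)) / t ^ 2 := by simp [ogmgEnergy]
    _ ≤ 2 * (f x - m) / t ^ 2 := by gcongr

lemma ogmgEnergy_sub_ogmgEnergy_step (hL : L ≠ 0) {t s : ℝ} (ht : t ≠ 0) (hs : s ≠ 0)
    (hts : t ^ 2 - t = s ^ 2) (y : E) {x x' v v' : E}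
    (hv : v' = v + (1 / (L * t * s ^ 2)) • ∇ f x)
    (hx : x' = x - (1 / L) • ∇ f x - (2 * s ^ 3 - s ^ 2) • v') :
    ogmgEnergy L f y t x v - ogmgEnergy L f y s x' v' =
      interpolationGap L f x x' / s ^ 2 + interpolationGap L f y x / (t * s ^ 2) := by
  have hxx' : x - x' = (1 / L) • ∇ f x + (2 * s ^ 3 - s ^ 2) • v' := by rw [hx]; abel
  have hyx' : y - x' = (y - x) + (1 / L) • ∇ f x + (2 * s ^ 3 - s ^ 2) • v' := by rw [hx]; abel
  simp only [ogmgEnergy, interpolationGap, hxx', hyx', hv, ← real_inner_self_eq_norm_sq,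
    inner_add_left, inner_add_right, inner_sub_left, inner_sub_right, real_inner_smul_left,
    real_inner_smul_right]
  rw [real_inner_comm (∇ f x') (∇ f x), real_inner_comm (∇ f y) (∇ f x), real_inner_comm v (∇ f x),
    real_inner_comm v (∇ f x')]
  field_simp
  -- Both sides are linear in the values of `f` and in the inner products; the coefficients of the
  -- six terms below differ by multiples of `t ^ 2 - t - s ^ 2`, all the others agree.
  linear_combination (2 * L * (f y - f x) + ⟪∇ f x, ∇ f x⟫ - ⟪∇ f y, ∇ f y⟫
    + 4 * L * t * s ^ 2 * ⟪v, ∇ f x⟫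
    + 2 * L ^ 2 * t ^ 2 * s ^ 2 * (t ^ 2 - t + s ^ 2) * ⟪v, v⟫) * hts

lemma ogmgEnergy_antitoneOn (hL : 0 < L) (hdiff : Differentiable ℝ f)
    (hconv : ConvexOn ℝ Set.univ f) (hlip : ∀ x y, ‖∇ f x - ∇ f y‖ ≤ L * ‖x - y‖)
    {N : ℕ} {θ : ℕ → ℝ} (hθpos : ∀ k ≤ N, 0 < θ k)
    (hθ : ∀ k < N, θ k ^ 2 - θ k = θ (k + 1) ^ 2) (y : E) {x v : ℕ → E}
    (hv : ∀ k < N, v (k + 1) = v k + (1 / (L * θ k * θ (k + 1) ^ 2)) • ∇ f (x k))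
    (hx : ∀ k < N, x (k + 1) = x k - (1 / L) • ∇ f (x k)
        - (2 * θ (k + 1) ^ 3 - θ (k + 1) ^ 2) • v (k + 1)) :
    AntitoneOn (fun k ↦ ogmgEnergy L f y (θ k) (x k) (v k)) (Set.Iic N) := by
  refine antitoneOn_of_add_one_le Set.ordConnected_Iic fun k _ hk hk1 ↦ sub_nonneg.1 ?_
  have hθk := hθpos k hk
  have hθk1 := hθpos (k + 1) hk1
  have hgap := interpolationGap_nonneg hL hdiff hconv hlip
  rw [ogmgEnergy_sub_ogmgEnergy_step hL.ne' hθk.ne' hθk1.ne' (hθ k hk1) y (hv k hk1) (hx k hk1)]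
  have := hgap (x k) (x (k + 1))
  have := hgap y (x k)
  positivity

lemma norm_gradient_sq_le_of_ogmg (hL : 0 < L) (hdiff : Differentiable ℝ f)
    (hconv : ConvexOn ℝ Set.univ f) (hlip : ∀ x y, ‖∇ f x - ∇ f y‖ ≤ L * ‖x - y‖)
    {m : ℝ} (hm : ∀ y, m ≤ f y) {N : ℕ} {θ : ℕ → ℝ} (hθN : θ N = 1) (hθpos : ∀ k ≤ N, 0 < θ k)
    (hθ : ∀ k < N, θ k ^ 2 - θ k = θ (k + 1) ^ 2) {x v : ℕ → E} (hv0 : v 0 = 0)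
    (hv : ∀ k < N, v (k + 1) = v k + (1 / (L * θ k * θ (k + 1) ^ 2)) • ∇ f (x k))
    (hx : ∀ k < N, x (k + 1) = x k - (1 / L) • ∇ f (x k)
        - (2 * θ (k + 1) ^ 3 - θ (k + 1) ^ 2) • v (k + 1)) :
    ‖∇ f (x N)‖ ^ 2 ≤ 2 * L * (f (x 0) - m) / θ 0 ^ 2 := by
  have henergy : ‖∇ f (x N)‖ ^ 2 / L ≤ 2 * (f (x 0) - m) / θ 0 ^ 2 :=
    calc ‖∇ f (x N)‖ ^ 2 / L = ogmgEnergy L f (x N) (θ N) (x N) (v N) := by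
          rw [hθN, ogmgEnergy_one_self]
      _ ≤ ogmgEnergy L f (x N) (θ 0) (x 0) (v 0) :=
          ogmgEnergy_antitoneOn hL hdiff hconv hlip hθpos hθ (x N) hv hx
            (Set.mem_Iic.2 N.zero_le) Set.self_mem_Iic N.zero_le
      _ ≤ 2 * (f (x 0) - m) / θ 0 ^ 2 := by
          rw [hv0]
          exact ogmgEnergy_zero_le hL hdiff hlip hm (x N) (x 0) (θ 0)
  calc ‖∇ f (x N)‖ ^ 2 ≤ 2 * (f (x 0) - m) / θ 0 ^ 2 * L := (div_le_iff₀ hL).1 henergy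
    _ = 2 * L * (f (x 0) - m) / θ 0 ^ 2 := by ring

theorem stmt_7_general (hL : 0 < L) (N : ℕ) (hdiff : Differentiable ℝ f)
    (hconv : ConvexOn ℝ Set.univ f) (hlip : ∀ x y, ‖∇ f x - ∇ f y‖ ≤ L * ‖x - y‖)
    (m : ℝ) (hm : ∀ y, m ≤ f y) (θ : ℕ → ℝ) (hθN : θ N = 1)
    (hθ : ∀ k < N, θ k = (1 + √(1 + 4 * θ (k + 1) ^ 2)) / 2) (x v : ℕ → E) (hv0 : v 0 = 0)
    (hv : ∀ k < N, v (k + 1) = v k + (1 / (L * θ k * θ (k + 1) ^ 2)) • ∇ f (x k))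
    (hx : ∀ k < N, x (k + 1) = x k - (1 / L) • ∇ f (x k)
        - (2 * θ (k + 1) ^ 3 - θ (k + 1) ^ 2) • v (k + 1)) :
    ‖∇ f (x N)‖ ^ 2 ≤ 8 * L * (f (x 0) - m) / ((N : ℝ) + 2) ^ 2 := by
  have hgrowth (k : ℕ) (hk : k ≤ N) : 1 + ((N : ℝ) - k) * (1 / 2) ≤ θ k :=
    hθN ▸ add_sub_mul_le_of_forall_add_le
      (fun k hk ↦ add_half_le_of_eq_one_add_sqrt_div_two (hθ k hk)) hk
  have hθpos (k : ℕ) (hk : k ≤ N) : 0 < θ k := by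
    have hkN : (k : ℝ) ≤ N := mod_cast hk
    linarith [hgrowth k hk]
  have hθ0 : ((N : ℝ) + 2) / 2 ≤ θ 0 := by
    have h := hgrowth 0 N.zero_le
    push_cast at h
    linarith
  have hD : 0 ≤ f (x 0) - m := sub_nonneg.2 (hm _)
  calc ‖∇ f (x N)‖ ^ 2 ≤ 2 * L * (f (x 0) - m) / θ 0 ^ 2 :=
        norm_gradient_sq_le_of_ogmg hL hdiff hconv hlip hm hθN hθpos
          (fun k hk ↦ sq_sub_self_of_eq_one_add_sqrt_div_two (hθ k hk)) hv0 hv hx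
    _ ≤ 2 * L * (f (x 0) - m) / (((N : ℝ) + 2) / 2) ^ 2 := by gcongr
    _ = 8 * L * (f (x 0) - m) / ((N : ℝ) + 2) ^ 2 := by
        field_simp
        ring

end OGMG

theorem stmt_7 {d : ℕ} (L : ℝ) (hL : 0 < L) (N : ℕ)
    (f : EuclideanSpace ℝ (Fin d) → ℝ)
    (hdiff : Differentiable ℝ f) (hconv : ConvexOn ℝ Set.univ f)
    (hlip : ∀ x y, ‖gradient f x - gradient f y‖ ≤ L * ‖x - y‖)
    (xs : EuclideanSpace ℝ (Fin d)) (hmin : ∀ y, f xs ≤ f y)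
    (θ : ℕ → ℝ) (hθN : θ N = 1)
    (hθ : ∀ k < N, θ k = (1 + Real.sqrt (1 + 4 * θ (k + 1) ^ 2)) / 2)
    (x v : ℕ → EuclideanSpace ℝ (Fin d)) (hv0 : v 0 = 0)
    (hv : ∀ k < N, v (k + 1) = v k + (1 / (L * θ k * θ (k + 1) ^ 2)) • gradient f (x k))
    (hx : ∀ k < N, x (k + 1) = x k - (1 / L) • gradient f (x k)
        - (2 * θ (k + 1) ^ 3 - θ (k + 1) ^ 2) • v (k + 1)) :
    ‖gradient f (x N)‖ ^ 2 ≤ 8 * L * (f (x 0) - f xs) / ((N : ℝ) + 2) ^ 2 :=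
  stmt_7_general hL N hdiff hconv hlip (f xs) hmin θ hθN hθ x v hv0 hv hx
end

section
/- Let f : ℝ^d → ℝ be L-smooth and convex with minimizer x⋆. Run the M-OGM-G iterations: v_0 = 0, v_{k+1} = v_k + (12/(L(N-k+1)(N-k+2)(N-k+3)))∇f(x_k), x_{k+1} = x_k - (1/L)∇f(x_k) - ((N-k)(N-k+1)(N-k+2)/6)v_{k+1}, for k = 0,...,N-1. Then with δ_{k+1} = 12/((N-k+1)(N-k+2)(N-k+3)), one has ∑_{k=0}^{N} (δ_{k+1}/2)‖∇f(x_k)‖² ≤ 12L(f(x_0) - f(x⋆))/((N+2)(N+3)). -/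
/-!
Write `g = ∇ f x` and `x⁺ = x - g / L`. An `L`-smooth convex `f` is the Moreau envelope of a convex
function `h`, with `h (x⁺) = f x - ‖g‖² / (2 L)` and `g` a subgradient of `h` at `x⁺`; this is the
cocoercivity inequality in disguise. In terms of `z k = (x k)⁺` the method M-OGM-G becomes a
proximal method, `z (k + 1) = z k - c k • v (k + 1) - (1 / L) • g (k + 1)`, and an explicit
potential built from `h`, `z`, `g`, `v` drops by at least the `k`-th summand of the claim at step
`k`, the slack being a nonnegative combination of two subgradient inequalities. The last value of
the potential is the last summand, and its first value is
`6 / ((N + 2) (N + 3)) * (L (h (z 0) - h (z N)) + ‖g 0‖²)`. The bound `‖g‖² ≤ 2 L (f x - inf f)`,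
applied at `x 0` and at `x N`, finishes the proof.
-/

open scoped Gradient RealInnerProductSpace

section NormedSpace

variable {E : Type*} [NormedAddCommGroup E] [NormedSpace ℝ E]

theorem add_apply_sub_le_of_convexOn_of_hasFDerivWithinAt {s : Set E} {f : E → ℝ}
    {f' : E →L[ℝ] ℝ} {x y : E} (hf : ConvexOn ℝ s f) (hf' : HasFDerivWithinAt f f' s x)
    (hx : x ∈ s) (hy : y ∈ s) :
    f x + f' (y - x) ≤ f y := by
  let line : ℝ →ᵃ[ℝ] E := AffineMap.lineMap x y
  have hline0 : line 0 = x := AffineMap.lineMap_apply_zero x y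
  have hline1 : line 1 = y := AffineMap.lineMap_apply_one x y
  have hderiv : HasDerivWithinAt (f ∘ line) (f' (y - x)) (line ⁻¹' s) 0 :=
    (hline0 ▸ hf').comp_hasDerivWithinAt 0 AffineMap.hasDerivWithinAt_lineMap
      (Set.mapsTo_preimage _ _)
  have hslope := (hf.comp_affineMap line).le_slope_of_hasDerivWithinAt
    (by rwa [Set.mem_preimage, hline0]) (by rwa [Set.mem_preimage, hline1]) zero_lt_one hderiv
  rw [slope_def_field, sub_zero, div_one, Function.comp_apply, Function.comp_apply, hline0,
    hline1] at hslope
  linarith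

theorem norm_image_sub_sub_le_of_norm_hasFDerivAt_sub_le {F : Type*} [NormedAddCommGroup F]
    [NormedSpace ℝ F] {f : E → F} {f' : E → E →L[ℝ] F} {x y : E} {L : ℝ}
    (hf : ∀ z ∈ segment ℝ x y, HasFDerivAt f (f' z) z)
    (hL : ∀ z ∈ segment ℝ x y, ‖f' z - f' x‖ ≤ L * ‖z - x‖) :
    ‖f y - f x - f' x (y - x)‖ ≤ L / 2 * ‖y - x‖ ^ 2 := by
  let line : ℝ → E := AffineMap.lineMap x y
  have hmem : ∀ t ∈ Set.Icc (0 : ℝ) 1, line t ∈ segment ℝ x y := fun t ht ↦ by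
    rw [segment_eq_image_lineMap]
    exact Set.mem_image_of_mem _ ht
  have herror : ∀ t ∈ Set.Icc (0 : ℝ) 1, HasDerivAt
      (fun t ↦ f (line t) - f x - t • f' x (y - x)) ((f' (line t) - f' x) (y - x)) t := by
    intro t ht
    have hline := (hf _ (hmem t ht)).comp_hasDerivAt t AffineMap.hasDerivAt_lineMap
    exact ((hline.sub_const (f x)).sub ((hasDerivAt_id t).smul_const (f' x (y - x)))).congr_deriv
      (by rw [one_smul, sub_apply])
  have hbound : ∀ t : ℝ,
      HasDerivAt (fun t ↦ L / 2 * ‖y - x‖ ^ 2 * t ^ 2) (L * ‖y - x‖ ^ 2 * t) t := fun t ↦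
    (((hasDerivAt_id t).pow 2).const_mul (L / 2 * ‖y - x‖ ^ 2)).congr_deriv (by simp; ring)
  have hderiv_le : ∀ t ∈ Set.Ico (0 : ℝ) 1,
      ‖(f' (line t) - f' x) (y - x)‖ ≤ L * ‖y - x‖ ^ 2 * t := fun t ht ↦ by
    have hdist : ‖line t - x‖ = t * ‖y - x‖ := by
      simp [line, AffineMap.lineMap_apply, norm_smul, abs_of_nonneg ht.1]
    calc ‖(f' (line t) - f' x) (y - x)‖
        ≤ ‖f' (line t) - f' x‖ * ‖y - x‖ := ContinuousLinearMap.le_opNorm _ _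
      _ ≤ L * ‖line t - x‖ * ‖y - x‖ := by gcongr; exact hL _ (hmem t ⟨ht.1, ht.2.le⟩)
      _ = L * ‖y - x‖ ^ 2 * t := by rw [hdist]; ring
  have hle := image_norm_le_of_norm_deriv_right_le_deriv_boundary
    (fun t ht ↦ (herror t ht).continuousAt.continuousWithinAt)
    (fun t ht ↦ (herror t (Set.Ico_subset_Icc_self ht)).hasDerivWithinAt)
    (by simp [line]) hbound hderiv_le (Set.right_mem_Icc.2 zero_le_one)
  simpa [line] using hle

end NormedSpace

section Smooth

variable {E : Type*} [NormedAddCommGroup E] [InnerProductSpace ℝ E] [CompleteSpace E]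
  {f : E → ℝ} {L : ℝ}

theorem norm_fderiv_sub_fderiv_eq_norm_gradient_sub_gradient (f : E → ℝ) (x y : E) :
    ‖fderiv ℝ f x - fderiv ℝ f y‖ = ‖∇ f x - ∇ f y‖ := by
  rw [← toDual_gradient, ← toDual_gradient, ← map_sub, LinearIsometryEquiv.norm_map]

theorem apply_sub_smul_le_of_lipschitz_gradient (hL : 0 < L) (hf : Differentiable ℝ f)
    (hlip : ∀ x y, ‖∇ f x - ∇ f y‖ ≤ L * ‖x - y‖) (x u : E) :
    f (x - (1 / L) • u) ≤ f x - 1 / L * ⟪∇ f x, u⟫ + ‖u‖ ^ 2 / (2 * L) := by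
  have hle := norm_image_sub_sub_le_of_norm_hasFDerivAt_sub_le (x := x) (y := x - (1 / L) • u)
    (fun z _ ↦ (hf z).hasFDerivAt)
    (fun z _ ↦ (norm_fderiv_sub_fderiv_eq_norm_gradient_sub_gradient f z x).trans_le (hlip z x))
  rw [← inner_gradient_left, sub_sub_cancel_left, inner_neg_right, real_inner_smul_right, norm_neg,
    norm_smul, mul_pow, Real.norm_eq_abs (1 / L), sq_abs] at hle
  have hquad : L / 2 * ((1 / L) ^ 2 * ‖u‖ ^ 2) = ‖u‖ ^ 2 / (2 * L) := by field_simp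
  linarith [le_of_abs_le hle]

theorem norm_gradient_sq_le_of_lower_bound (hL : 0 < L) (hf : Differentiable ℝ f)
    (hlip : ∀ x y, ‖∇ f x - ∇ f y‖ ≤ L * ‖x - y‖) {c : ℝ} (hc : ∀ y, c ≤ f y) (x : E) :
    ‖∇ f x‖ ^ 2 ≤ 2 * L * (f x - c) := by
  have hdescent := apply_sub_smul_le_of_lipschitz_gradient hL hf hlip x (∇ f x)
  rw [real_inner_self_eq_norm_sq] at hdescent
  have hhalf : 1 / L * ‖∇ f x‖ ^ 2 = 2 * (‖∇ f x‖ ^ 2 / (2 * L)) := by field_simp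
  rw [← div_le_iff₀' (by positivity)]
  linarith [hc (x - (1 / L) • ∇ f x)]

theorem cocoercive_of_convexOn_of_lipschitz_gradient (hL : 0 < L) (hf : Differentiable ℝ f)
    (hconv : ConvexOn ℝ Set.univ f) (hlip : ∀ x y, ‖∇ f x - ∇ f y‖ ≤ L * ‖x - y‖) (x y : E) :
    f y + ⟪∇ f y, x - y⟫ + ‖∇ f x - ∇ f y‖ ^ 2 / (2 * L) ≤ f x := by
  set u := ∇ f x - ∇ f y with hu
  have hdescent := apply_sub_smul_le_of_lipschitz_gradient hL hf hlip x u
  have htangent := add_apply_sub_le_of_convexOn_of_hasFDerivWithinAt hconv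
    (hf y).hasFDerivAt.hasFDerivWithinAt (Set.mem_univ y) (Set.mem_univ (x - (1 / L) • u))
  rw [← inner_gradient_left, sub_right_comm, inner_sub_right, real_inner_smul_right] at htangent
  have hinner : ⟪∇ f x, u⟫ - ⟪∇ f y, u⟫ = ‖u‖ ^ 2 := by
    rw [← inner_sub_left, ← hu, real_inner_self_eq_norm_sq]
  have hhalf : 1 / L * (⟪∇ f x, u⟫ - ⟪∇ f y, u⟫) = 2 * (‖u‖ ^ 2 / (2 * L)) := by
    rw [hinner]; field_simp
  linarith

/-- The gradient step `x⁺ = x - ∇ f x / L`. -/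
noncomputable def gradientStep (L : ℝ) (f : E → ℝ) (x : E) : E := x - (1 / L) • ∇ f x

/-- The value at `gradientStep L f x` of the convex function of which `f` is the Moreau envelope,
indexed by `x` so that this function need not be constructed. -/
noncomputable def preEnvelope (L : ℝ) (f : E → ℝ) (x : E) : ℝ := f x - ‖∇ f x‖ ^ 2 / (2 * L)

theorem preEnvelope_add_inner_le (hL : 0 < L) (hf : Differentiable ℝ f)
    (hconv : ConvexOn ℝ Set.univ f) (hlip : ∀ x y, ‖∇ f x - ∇ f y‖ ≤ L * ‖x - y‖) (y x : E) :
    preEnvelope L f y + ⟪∇ f y, gradientStep L f x - gradientStep L f y⟫ ≤ preEnvelope L f x := by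
  have hcoco := cocoercive_of_convexOn_of_lipschitz_gradient hL hf hconv hlip x y
  have hsteps : gradientStep L f x - gradientStep L f y
      = (x - y) - (1 / L) • (∇ f x - ∇ f y) := by
    simp only [gradientStep]; module
  rw [hsteps, inner_sub_right _ (x - y), real_inner_smul_right, inner_sub_right _ (∇ f x),
    real_inner_self_eq_norm_sq, preEnvelope, preEnvelope]
  rw [norm_sub_sq_real, real_inner_comm (∇ f y) (∇ f x)] at hcoco
  have hsplit : (‖∇ f x‖ ^ 2 - 2 * ⟪∇ f y, ∇ f x⟫ + ‖∇ f y‖ ^ 2) / (2 * L)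
      = ‖∇ f x‖ ^ 2 / (2 * L) - 1 / L * (⟪∇ f y, ∇ f x⟫ - ‖∇ f y‖ ^ 2) - ‖∇ f y‖ ^ 2 / (2 * L) := by
    field_simp; ring
  linarith

end Smooth

section Proximal

variable {E : Type*} [NormedAddCommGroup E] [InnerProductSpace ℝ E]
  {L : ℝ} {N : ℕ} {h : ℕ → ℝ} {z g v : ℕ → E}

/-- The potential of M-OGM-G with horizon `N`, in proximal form: `h k` and `g k` are a value and a
subgradient at `z k`, and `v k` is the momentum. -/
noncomputable def mogmgPotential (L : ℝ) (N : ℕ) (h : ℕ → ℝ) (z g v : ℕ → E) (k : ℕ) : ℝ :=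
  6 / (((N : ℝ) - k + 2) * ((N : ℝ) - k + 3)) * (L * (h k - h N) + ‖g k‖ ^ 2)
    + L ^ 2 * ⟪v k, z N - z k⟫ + L * ((N : ℝ) - k) * ⟪g k, v k⟫
    + L ^ 2 * (((N : ℝ) - k) * ((N : ℝ) - k + 1) * ((N : ℝ) - k + 2) * ((N : ℝ) - k + 3) / 24)
      * ‖v k‖ ^ 2

theorem mogmgPotential_zero (hv0 : v 0 = 0) :
    mogmgPotential L N h z g v 0
      = 6 / (((N : ℝ) + 2) * ((N : ℝ) + 3)) * (L * (h 0 - h N) + ‖g 0‖ ^ 2) := by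
  simp [mogmgPotential, hv0]

theorem mogmgPotential_horizon : mogmgPotential L N h z g v N = ‖g N‖ ^ 2 := by
  norm_num [mogmgPotential]

theorem mogmgPotential_sub_succ {k : ℕ} (hL : L ≠ 0) (hk : k ≤ N)
    (hv : v (k + 1) = v k +
      (12 / (L * ((N : ℝ) - k + 1) * ((N : ℝ) - k + 2) * ((N : ℝ) - k + 3))) • g k)
    (hz : z (k + 1) = z k
      - (((N : ℝ) - k) * ((N : ℝ) - k + 1) * ((N : ℝ) - k + 2) / 6) • v (k + 1)
      - (1 / L) • g (k + 1)) :
    mogmgPotential L N h z g v k - mogmgPotential L N h z g v (k + 1)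
      = 12 / (((N : ℝ) - k + 1) * ((N : ℝ) - k + 2) * ((N : ℝ) - k + 3)) / 2 * ‖g k‖ ^ 2
        + 6 / (((N : ℝ) - k + 1) * ((N : ℝ) - k + 2)) * L
          * (h k - (h (k + 1) + ⟪g (k + 1), z k - z (k + 1)⟫))
        + 12 / (((N : ℝ) - k + 1) * ((N : ℝ) - k + 2) * ((N : ℝ) - k + 3)) * L
          * (h N - (h k + ⟪g k, z N - z k⟫)) := by
  have hr : (0 : ℝ) ≤ N - k := sub_nonneg.2 (Nat.cast_le.2 hk)
  have hsucc : (N : ℝ) - (k + 1 : ℕ) = N - k - 1 := by push_cast; ring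
  simp only [mogmgPotential, hsucc]
  generalize (N : ℝ) - k = r at *
  have hshift2 : r - 1 + 2 = r + 1 := by ring
  have hshift3 : r - 1 + 3 = r + 2 := by ring
  have hstep : z k - z (k + 1) = (r * (r + 1) * (r + 2) / 6) • v (k + 1) + (1 / L) • g (k + 1) := by
    rw [hz]; abel
  have htail : z N - z (k + 1) = (z N - z k) + (z k - z (k + 1)) := by abel
  rw [htail, hstep, hv, hshift2, hshift3]
  simp only [← real_inner_self_eq_norm_sq, inner_add_right, inner_add_left, real_inner_smul_right,
    real_inner_smul_left]
  rw [real_inner_comm (g k) (g (k + 1)), real_inner_comm (v k) (g (k + 1)),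
    real_inner_comm (v k) (g k)]
  have h1 : r + 1 ≠ 0 := by positivity
  have h2 : r + 2 ≠ 0 := by positivity
  have h3 : r + 3 ≠ 0 := by positivity
  field_simp
  ring

theorem sum_norm_sq_le_of_proximal_mogmg (hL : 0 < L)
    (hsub : ∀ i j, h i + ⟪g i, z j - z i⟫ ≤ h j) (hv0 : v 0 = 0)
    (hv : ∀ k < N, v (k + 1) = v k +
      (12 / (L * ((N : ℝ) - k + 1) * ((N : ℝ) - k + 2) * ((N : ℝ) - k + 3))) • g k)
    (hz : ∀ k < N, z (k + 1) = z k
      - (((N : ℝ) - k) * ((N : ℝ) - k + 1) * ((N : ℝ) - k + 2) / 6) • v (k + 1)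
      - (1 / L) • g (k + 1)) :
    ∑ k ∈ Finset.range (N + 1),
        12 / (((N : ℝ) - k + 1) * ((N : ℝ) - k + 2) * ((N : ℝ) - k + 3)) / 2 * ‖g k‖ ^ 2
      ≤ 6 / (((N : ℝ) + 2) * ((N : ℝ) + 3)) * (L * (h 0 - h N) + ‖g 0‖ ^ 2) := by
  let U := mogmgPotential L N h z g v
  have hdecrease : ∀ k ∈ Finset.range N,
      12 / (((N : ℝ) - k + 1) * ((N : ℝ) - k + 2) * ((N : ℝ) - k + 3)) / 2 * ‖g k‖ ^ 2
        ≤ U k - U (k + 1) := by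
    intro k hk
    have hkN : k < N := Finset.mem_range.1 hk
    have hr : (0 : ℝ) ≤ N - k := sub_nonneg.2 (Nat.cast_le.2 hkN.le)
    rw [mogmgPotential_sub_succ hL.ne' hkN.le (hv k hkN) (hz k hkN), add_assoc]
    have hnext := sub_nonneg.2 (hsub (k + 1) k)
    have hlast := sub_nonneg.2 (hsub k N)
    exact le_add_of_nonneg_right (by positivity)
  have htelescope := (Finset.sum_le_sum hdecrease).trans_eq (Finset.sum_range_sub' U N)
  have hlast_weight :
      (12 : ℝ) / (((N : ℝ) - N + 1) * ((N : ℝ) - N + 2) * ((N : ℝ) - N + 3)) / 2 = 1 := by norm_num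
  simp only [U, mogmgPotential_zero hv0, mogmgPotential_horizon] at htelescope
  rw [Finset.sum_range_succ, hlast_weight, one_mul]
  exact le_sub_iff_add_le.1 htelescope

end Proximal

theorem stmt_8_general {E : Type*} [NormedAddCommGroup E] [InnerProductSpace ℝ E] [CompleteSpace E]
    (L : ℝ) (hL : 0 < L) (N : ℕ) (f : E → ℝ)
    (hdiff : Differentiable ℝ f) (hconv : ConvexOn ℝ Set.univ f)
    (hlip : ∀ x y, ‖∇ f x - ∇ f y‖ ≤ L * ‖x - y‖)
    (c : ℝ) (hc : ∀ y, c ≤ f y)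
    (x v : ℕ → E) (hv0 : v 0 = 0)
    (hv : ∀ k < N, v (k + 1) = v k +
      (12 / (L * ((N : ℝ) - k + 1) * ((N : ℝ) - k + 2) * ((N : ℝ) - k + 3))) • ∇ f (x k))
    (hx : ∀ k < N, x (k + 1) = x k - (1 / L) • ∇ f (x k)
        - (((N : ℝ) - k) * ((N : ℝ) - k + 1) * ((N : ℝ) - k + 2) / 6) • v (k + 1)) :
    ∑ k ∈ Finset.range (N + 1),
        12 / (((N : ℝ) - k + 1) * ((N : ℝ) - k + 2) * ((N : ℝ) - k + 3)) / 2 * ‖∇ f (x k)‖ ^ 2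
      ≤ 12 * L * (f (x 0) - c) / (((N : ℝ) + 2) * ((N : ℝ) + 3)) := by
  have hproximal := sum_norm_sq_le_of_proximal_mogmg hL
    (fun i j ↦ preEnvelope_add_inner_le hL hdiff hconv hlip (x i) (x j)) hv0 hv
    (fun k hk ↦ congrArg (· - (1 / L) • ∇ f (x (k + 1))) (hx k hk))
  have hgrad0 := norm_gradient_sq_le_of_lower_bound hL hdiff hlip hc (x 0)
  have hgradN := norm_gradient_sq_le_of_lower_bound hL hdiff hlip hc (x N)
  have henvelope (y : E) : L * preEnvelope L f y = L * f y - ‖∇ f y‖ ^ 2 / 2 := by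
    rw [preEnvelope]; field_simp
  have hinit : L * (preEnvelope L f (x 0) - preEnvelope L f (x N)) + ‖∇ f (x 0)‖ ^ 2
      ≤ 2 * L * (f (x 0) - c) := by
    linarith [henvelope (x 0), henvelope (x N)]
  calc _ ≤ 6 / (((N : ℝ) + 2) * ((N : ℝ) + 3))
        * (L * (preEnvelope L f (x 0) - preEnvelope L f (x N)) + ‖∇ f (x 0)‖ ^ 2) := hproximal
    _ ≤ 6 / (((N : ℝ) + 2) * ((N : ℝ) + 3)) * (2 * L * (f (x 0) - c)) := by gcongr
    _ = 12 * L * (f (x 0) - c) / (((N : ℝ) + 2) * ((N : ℝ) + 3)) := by ring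

theorem stmt_8 {d : ℕ} (L : ℝ) (hL : 0 < L) (N : ℕ)
    (f : EuclideanSpace ℝ (Fin d) → ℝ)
    (hdiff : Differentiable ℝ f) (hconv : ConvexOn ℝ Set.univ f)
    (hlip : ∀ x y, ‖gradient f x - gradient f y‖ ≤ L * ‖x - y‖)
    (xs : EuclideanSpace ℝ (Fin d)) (hmin : ∀ y, f xs ≤ f y)
    (x v : ℕ → EuclideanSpace ℝ (Fin d)) (hv0 : v 0 = 0)
    (hv : ∀ k < N, v (k + 1) = v k +
      (12 / (L * ((N : ℝ) - k + 1) * ((N : ℝ) - k + 2) * ((N : ℝ) - k + 3))) • gradient f (x k))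
    (hx : ∀ k < N, x (k + 1) = x k - (1 / L) • gradient f (x k)
        - (((N : ℝ) - k) * ((N : ℝ) - k + 1) * ((N : ℝ) - k + 2) / 6) • v (k + 1)) :
    ∑ k ∈ Finset.range (N + 1),
        12 / (((N : ℝ) - k + 1) * ((N : ℝ) - k + 2) * ((N : ℝ) - k + 3)) / 2 *
          ‖gradient f (x k)‖ ^ 2
      ≤ 12 * L * (f (x 0) - f xs) / (((N : ℝ) + 2) * ((N : ℝ) + 3)) :=
  stmt_8_general L hL N f hdiff hconv hlip (f xs) hmin x v hv0 hv hx
end
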